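/- arXiv:1010.4609 — 3 statements merged into one kernel-verified Lean document; each statement's English description precedes it below -/
import Mathlib

section
/- Let v be a variable of a binary CSP with n = |V| variables and let a, b ∈ D(v). Then: (i) a and b are neighborhood interchangeable if and only if they are 2-interchangeable; (ii) for all integers i, j with 2 ≤ i ≤ j ≤ n, if a and b are i-interchangeable then they are j-interchangeable; (iii) a and b are n-interchangeable if and only if they are fully interchangeable. Consequently, neighborhood interchangeability implies k-interchangeability for every 2 ≤ k ≤ n, which in turn implies full interchangeability. -/
/-- A binary CSP: variables `V`, a domain `dom v ⊆ α` for each variable, a symmetric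
irreflexive relation `hasCstr` telling which pairs of distinct variables are related by a
constraint, and for related variables the symmetric compatibility relation `compat`. -/
structure BinaryCSP (V α : Type) where
  dom : V → Set α
  hasCstr : V → V → Prop
  compat : V → α → V → α → Prop
  hasCstr_symm : ∀ {v w}, hasCstr v w → hasCstr w v
  hasCstr_irrefl : ∀ v, ¬ hasCstr v v
  compat_symm : ∀ {v w} {a c}, compat v a w c → compat w c v a

namespace BinaryCSP

variable {V α : Type}

/-- A solution: an assignment in the domains satisfying all constraints. -/
def Solution (P : BinaryCSP V α) (s : V → α) : Prop :=
  (∀ v, s v ∈ P.dom v) ∧ ∀ v w, P.hasCstr v w → P.compat v (s v) w (s w)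

/-- The support set of value `a` for variable `v` at a variable `w`:
the domain values of `w` compatible with `v = a`. -/
def Support (P : BinaryCSP V α) (v : V) (a : α) (w : V) : Set α :=
  {c | c ∈ P.dom w ∧ P.compat v a w c}

/-- A solution of the subproblem induced by the set `S` of variables. -/
def SubSolution (P : BinaryCSP V α) (S : Set V) (s : V → α) : Prop :=
  (∀ v ∈ S, s v ∈ P.dom v) ∧
    ∀ v ∈ S, ∀ w ∈ S, P.hasCstr v w → P.compat v (s v) w (s w)

/-- Neighborhood interchangeability (NI) of values `a`, `b` for variable `v`. -/
def NI (P : BinaryCSP V α) (v : V) (a b : α) : Prop :=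
  ∀ w, P.hasCstr v w → P.Support v a w = P.Support v b w

/-- Full interchangeability (FI) of values `a`, `b` for variable `v`. -/
def FI [DecidableEq V] (P : BinaryCSP V α) (v : V) (a b : α) : Prop :=
  (∀ s, P.Solution s → s v = a → P.Solution (Function.update s v b)) ∧
  (∀ s, P.Solution s → s v = b → P.Solution (Function.update s v a))

/-- Full interchangeability of `a`, `b` for `v` in the subproblem induced by `S`. -/
def SubFI [DecidableEq V] (P : BinaryCSP V α) (S : Set V) (v : V) (a b : α) : Prop :=
  (∀ s, P.SubSolution S s → s v = a → P.SubSolution S (Function.update s v b)) ∧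
  (∀ s, P.SubSolution S s → s v = b → P.SubSolution S (Function.update s v a))

/-- Subproblem interchangeability (SPrI) with respect to `S` (where `v ∈ S`):
full interchangeability in the subproblem induced by `S`. -/
def SPrI [DecidableEq V] (P : BinaryCSP V α) (S : Set V) (v : V) (a b : α) : Prop :=
  P.SubFI S v a b

/-- k-interchangeability (KI): `a`, `b` are fully interchangeable in every
subproblem induced by `v` together with `k - 1` other variables. -/
def KI [DecidableEq V] (P : BinaryCSP V α) (k : ℕ) (v : V) (a b : α) : Prop :=
  ∀ T : Finset V, v ∉ T → T.card = k - 1 → P.SubFI (insert v (T : Set V)) v a b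

/-- Partial interchangeability (PI) with respect to `S` (where `v ∈ S`). -/
def PI (P : BinaryCSP V α) (S : Set V) (v : V) (a b : α) : Prop :=
  (∀ s, P.Solution s → s v = a →
    ∃ s', P.Solution s' ∧ s' v = b ∧ ∀ w ∉ S, s' w = s w) ∧
  (∀ s, P.Solution s → s v = b →
    ∃ s', P.Solution s' ∧ s' v = a ∧ ∀ w ∉ S, s' w = s w)

/-- Substitutability (Sub): `a` is substitutable for `b` at variable `v`. -/
def Sub [DecidableEq V] (P : BinaryCSP V α) (v : V) (a b : α) : Prop :=
  ∀ s, P.Solution s → s v = b → P.Solution (Function.update s v a)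

/-- Neighborhood substitutability (NSub): `a` is NSub for `b` at variable `v`. -/
def NSub (P : BinaryCSP V α) (v : V) (a b : α) : Prop :=
  ∀ w, P.hasCstr v w → P.Support v b w ⊆ P.Support v a w

/-- Neighborhood partial interchangeability (NPI) given boundary `S` (where `v ∈ S`). -/
def NPI (P : BinaryCSP V α) (S : Set V) (v : V) (a b : α) : Prop :=
  ∀ w, w ∉ S → P.hasCstr v w → P.Support v a w = P.Support v b w

/-- Directional interchangeability (DirI) with respect to a strict order `r` on variables. -/
def DirI (P : BinaryCSP V α) (r : V → V → Prop) (v : V) (a b : α) : Prop :=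
  ∀ w, r w v → P.hasCstr v w → P.Support v a w = P.Support v b w

/-- Dynamic neighborhood interchangeability (DynNI) of `a`, `b` for `v` with respect to
the partial assignment `A` on the set `W` of variables (where `v ∉ W`). -/
def DynNI (P : BinaryCSP V α) (W : Set V) (A : V → α) (v : V) (a b : α) : Prop :=
  (∀ w, w ∉ W → P.hasCstr v w → P.Support v a w = P.Support v b w) ∧
  (∀ w ∈ W, P.hasCstr v w → (P.compat v a w (A w) ↔ P.compat v b w (A w)))

/-- Full dynamic interchangeability (FDynI) with respect to the partial assignment
`A` on `W` (where `v ∉ W`). -/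
def FDynI [DecidableEq V] (P : BinaryCSP V α) (W : Set V) (A : V → α) (v : V) (a b : α) :
    Prop :=
  (∀ s, P.Solution s → (∀ w ∈ W, s w = A w) → s v = a →
    P.Solution (Function.update s v b)) ∧
  (∀ s, P.Solution s → (∀ w ∈ W, s w = A w) → s v = b →
    P.Solution (Function.update s v a))

/-- Full dynamic substitutability (FDynSub): `a` is fully dynamically substitutable for
`b` with respect to the partial assignment `A` on `W` (where `v ∉ W`). -/
def FDynSub [DecidableEq V] (P : BinaryCSP V α) (W : Set V) (A : V → α) (v : V) (a b : α) :
    Prop :=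
  ∀ s, P.Solution s → (∀ w ∈ W, s w = A w) → s v = b → P.Solution (Function.update s v a)

/-- Neighborhood tuple interchangeability (NTI) of `a`, `b` for `v` with respect to the
set `S` of variables (where `v ∉ S`). -/
def NTI (P : BinaryCSP V α) (S : Set V) (v : V) (a b : α) : Prop :=
  (∀ t, P.SubSolution (insert v S) t → t v = a →
    ∃ t', P.SubSolution (insert v S) t' ∧ t' v = b ∧
      ∀ u ∈ insert v S, ∀ w, w ∉ insert v S → P.hasCstr u w →
        P.Support u (t u) w = P.Support u (t' u) w) ∧
  (∀ t, P.SubSolution (insert v S) t → t v = b →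
    ∃ t', P.SubSolution (insert v S) t' ∧ t' v = a ∧
      ∀ u ∈ insert v S, ∀ w, w ∉ insert v S → P.hasCstr u w →
        P.Support u (t u) w = P.Support u (t' u) w)

/-- Forward neighborhood interchangeability (ForwNI) of two assignments on `U`. -/
def ForwNI (P : BinaryCSP V α) (U : Set V) (u u' : V → α) : Prop :=
  ∀ x ∈ U, ∀ w, w ∉ U → P.hasCstr x w → P.Support x (u x) w = P.Support x (u' x) w

/-- Context dependent interchangeability (CtxDepI): some assignment to the other
variables extends to a solution both with `v = a` and with `v = b`. -/
def CtxDepI [DecidableEq V] (P : BinaryCSP V α) (v : V) (a b : α) : Prop :=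
  ∃ t : V → α, P.Solution (Function.update t v a) ∧ P.Solution (Function.update t v b)

/-- Generalized neighborhood substitutability (GNSub): `a` and `b` share at least one
support with respect to each neighboring variable. -/
def GNSub (P : BinaryCSP V α) (v : V) (a b : α) : Prop :=
  ∀ w, P.hasCstr v w → ∃ c ∈ P.dom w, P.compat v a w c ∧ P.compat v b w c

end BinaryCSP

/-!
Let `v ∉ T`. By symmetry of the constraints, a value `a` for `v` extends a solution `s` of the
subproblem on `T` exactly when `a` is compatible with `s w` for each neighbor `w ∈ T` of `v`.
Compatibility is thus tested one neighbor at a time, and interchangeability of `a` and `b` passes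
from smaller subproblems to a larger one as soon as each neighbor of `v` in the larger one occurs
in one of the smaller ones. Neighborhood interchangeability is the case where each smaller
subproblem consists of `v` and one neighbor.
-/

namespace BinaryCSP

variable {V α : Type} {P : BinaryCSP V α} {S T : Set V} {v w : V} {a b : α} {s s' : V → α}

/-- Value `a` for variable `v` satisfies every constraint between `v` and a variable of `T` whose
value is given by `s`: this is what `a` needs to extend a solution `s` on `T ∌ v`. As no constraint
relates `v` to itself, `s v` is never read, even if `v ∈ T`. -/
def CompatOn (P : BinaryCSP V α) (T : Set V) (s : V → α) (v : V) (a : α) : Prop :=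
  ∀ w ∈ T, P.hasCstr v w → P.compat v a w (s w)

theorem ne_of_hasCstr (h : P.hasCstr v w) : v ≠ w := by
  rintro rfl
  exact P.hasCstr_irrefl v h

theorem SubSolution.mono (hs : P.SubSolution T s) (hST : S ⊆ T) : P.SubSolution S s :=
  ⟨fun x hx => hs.1 x (hST hx), fun x hx y hy => hs.2 x (hST hx) y (hST hy)⟩

theorem CompatOn.mono (h : P.CompatOn T s v a) (hST : S ⊆ T) : P.CompatOn S s v a :=
  fun w hw => h w (hST hw)

theorem subSolution_congr (h : Set.EqOn s s' T) : P.SubSolution T s ↔ P.SubSolution T s' :=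
  and_congr (forall₂_congr fun x hx => by rw [h hx])
    (forall₄_congr fun x hx y hy => by rw [h hx, h hy])

theorem compatOn_congr (h : Set.EqOn s s' T) : P.CompatOn T s v a ↔ P.CompatOn T s' v a :=
  forall₂_congr fun w hw => by rw [h hw]

theorem subSolution_singleton_iff : P.SubSolution {w} s ↔ s w ∈ P.dom w := by
  simp [SubSolution, P.hasCstr_irrefl w]

theorem subSolution_univ_iff : P.SubSolution Set.univ s ↔ P.Solution s := by
  simp [SubSolution, Solution]

theorem subSolution_insert_iff :
    P.SubSolution (insert v T) s ↔
      P.SubSolution T s ∧ s v ∈ P.dom v ∧ P.CompatOn T s v (s v) := by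
  constructor
  · intro hs
    exact ⟨hs.mono (Set.subset_insert v T), hs.1 v (Set.mem_insert v T),
      fun w hw => hs.2 v (Set.mem_insert v T) w (Set.mem_insert_of_mem v hw)⟩
  · rintro ⟨hs, hv, hcompat⟩
    refine ⟨Set.forall_mem_insert.2 ⟨hv, hs.1⟩, ?_⟩
    rintro x (rfl | hx) y (rfl | hy) hxy
    · exact (P.hasCstr_irrefl _ hxy).elim
    · exact hcompat y hy hxy
    · exact P.compat_symm (hcompat x hx (P.hasCstr_symm hxy))
    · exact hs.2 x hx y hy hxy

variable [DecidableEq V]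

theorem subSolution_insert_update_iff (hv : v ∉ T) (ha : a ∈ P.dom v) :
    P.SubSolution (insert v T) (Function.update s v a) ↔
      P.SubSolution T s ∧ P.CompatOn T s v a := by
  have hagree : Set.EqOn (Function.update s v a) s T := fun w hw =>
    Function.update_of_ne (ne_of_mem_of_not_mem hw hv) a s
  rw [subSolution_insert_iff, subSolution_congr hagree, Function.update_self,
    compatOn_congr hagree, and_iff_right ha]

theorem subFI_iff_forall_update :
    P.SubFI S v a b ↔ ∀ s : V → α,
      P.SubSolution S (Function.update s v a) ↔ P.SubSolution S (Function.update s v b) := by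
  constructor
  · rintro ⟨hab, hba⟩ s
    constructor <;> intro hs
    · simpa using hab _ hs (Function.update_self v a s)
    · simpa using hba _ hs (Function.update_self v b s)
  · intro h
    constructor <;> rintro s hs rfl
    · exact (h s).1 (by rwa [Function.update_eq_self])
    · exact (h s).2 (by rwa [Function.update_eq_self])

theorem subFI_insert_iff (hv : v ∉ T) (ha : a ∈ P.dom v) (hb : b ∈ P.dom v) :
    P.SubFI (insert v T) v a b ↔
      ∀ s, P.SubSolution T s → (P.CompatOn T s v a ↔ P.CompatOn T s v b) := by
  simp only [subFI_iff_forall_update, subSolution_insert_update_iff hv ha,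
    subSolution_insert_update_iff hv hb, and_congr_right_iff]

theorem subFI_univ_iff : P.SubFI Set.univ v a b ↔ P.FI v a b := by
  simp only [SubFI, FI, subSolution_univ_iff]

theorem subFI_pair_iff (hvw : P.hasCstr v w) (ha : a ∈ P.dom v) (hb : b ∈ P.dom v) :
    P.SubFI {v, w} v a b ↔ P.Support v a w = P.Support v b w := by
  have hv : v ∉ ({w} : Set V) := ne_of_hasCstr hvw
  simp only [subFI_insert_iff hv ha hb, subSolution_singleton_iff, CompatOn,
    Set.mem_singleton_iff, forall_eq, hvw, forall_const, Support, Set.ext_iff,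
    Set.mem_ofPred_eq, and_congr_right_iff]
  exact ⟨fun h c => h fun _ => c, fun h s => h (s w)⟩

theorem subFI_insert_of_forall_neighbor (hv : v ∉ T) (ha : a ∈ P.dom v) (hb : b ∈ P.dom v)
    (hcover : ∀ w ∈ T, P.hasCstr v w → ∃ S ⊆ T, w ∈ S ∧ P.SubFI (insert v S) v a b) :
    P.SubFI (insert v T) v a b := by
  have hlocal : ∀ s, P.SubSolution T s → ∀ w ∈ T, P.hasCstr v w →
      ∃ S ⊆ T, w ∈ S ∧ (P.CompatOn S s v a ↔ P.CompatOn S s v b) := by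
    intro s hs w hw hvw
    obtain ⟨S, hST, hwS, hS⟩ := hcover w hw hvw
    exact ⟨S, hST, hwS, (subFI_insert_iff (fun h => hv (hST h)) ha hb).1 hS s (hs.mono hST)⟩
  refine (subFI_insert_iff hv ha hb).2 fun s hs => ⟨fun h w hw hvw => ?_, fun h w hw hvw => ?_⟩
  all_goals obtain ⟨S, hST, hwS, hS⟩ := hlocal s hs w hw hvw
  · exact hS.1 (h.mono hST) w hwS hvw
  · exact hS.2 (h.mono hST) w hwS hvw

theorem NI.subFI_insert (h : P.NI v a b) (hv : v ∉ T) (ha : a ∈ P.dom v) (hb : b ∈ P.dom v) :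
    P.SubFI (insert v T) v a b :=
  subFI_insert_of_forall_neighbor hv ha hb fun w hw hvw =>
    ⟨{w}, Set.singleton_subset_iff.2 hw, rfl, (subFI_pair_iff hvw ha hb).2 (h w hvw)⟩

theorem NI.ki (h : P.NI v a b) (ha : a ∈ P.dom v) (hb : b ∈ P.dom v) (k : ℕ) : P.KI k v a b :=
  fun _ hv _ => h.subFI_insert hv ha hb

theorem ni_iff_ki_two (ha : a ∈ P.dom v) (hb : b ∈ P.dom v) : P.NI v a b ↔ P.KI 2 v a b := by
  refine ⟨fun h => h.ki ha hb 2, fun h w hvw => (subFI_pair_iff hvw ha hb).1 ?_⟩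
  have hv : v ∉ ({w} : Finset V) := by simpa using ne_of_hasCstr hvw
  simpa using h {w} hv rfl

theorem KI.subFI_insert {k : ℕ} (h : P.KI k v a b) (hk : 2 ≤ k) (hv : v ∉ T)
    (hkT : k ≤ (insert v T).encard) (ha : a ∈ P.dom v) (hb : b ∈ P.dom v) :
    P.SubFI (insert v T) v a b := by
  refine subFI_insert_of_forall_neighbor hv ha hb fun w hw _ => ?_
  obtain ⟨m, rfl⟩ := Nat.exists_eq_add_of_le' hk
  have hmT : ((m + 1 : ℕ) : ℕ∞) ≤ T.encard := by
    rw [Set.encard_insert_of_notMem hv] at hkT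
    exact (ENat.add_le_add_iff_right ENat.one_ne_top).1 (mod_cast hkT)
  obtain ⟨S, hwS, hST, hS⟩ := Set.exists_superset_subset_encard_eq
    (Set.singleton_subset_iff.2 hw) (by simp) hmT
  obtain ⟨U, rfl⟩ := (Set.finite_of_encard_eq_coe hS).exists_finset_coe
  refine ⟨U, hST, Set.singleton_subset_iff.1 hwS, h U (fun hvU => hv (hST hvU)) ?_⟩
  rw [Set.encard_coe_eq_coe_finsetCard] at hS
  exact mod_cast hS

theorem KI.mono {i j : ℕ} (h : P.KI i v a b) (hi : 2 ≤ i) (hij : i ≤ j)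
    (ha : a ∈ P.dom v) (hb : b ∈ P.dom v) : P.KI j v a b := by
  intro T hv hT
  refine h.subFI_insert hi hv ?_ ha hb
  rw [Set.encard_insert_of_notMem (mod_cast hv), Set.encard_coe_eq_coe_finsetCard]
  norm_cast
  omega

theorem KI.fi {k : ℕ} (h : P.KI k v a b) (hk : 2 ≤ k) (hkV : k ≤ ENat.card V)
    (ha : a ∈ P.dom v) (hb : b ∈ P.dom v) : P.FI v a b := by
  have hinsert : insert v ({v}ᶜ : Set V) = Set.univ := by simp [Set.insert_eq]
  rw [← subFI_univ_iff, ← hinsert]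
  exact h.subFI_insert hk (by simp) (by rwa [hinsert, Set.encard_univ]) ha hb

theorem ki_card_iff_fi [Fintype V] : P.KI (Fintype.card V) v a b ↔ P.FI v a b := by
  have hcompl : ∀ T : Finset V, v ∉ T ∧ T.card = Fintype.card V - 1 ↔ T = {v}ᶜ := by
    intro T
    constructor
    · rintro ⟨hv, hT⟩
      refine Finset.eq_of_subset_of_card_le (Finset.subset_compl_singleton.2 hv) ?_
      rw [Finset.card_compl, Finset.card_singleton, hT]
    · rintro rfl
      simp [Finset.card_compl]
  have hinsert : insert v (({v}ᶜ : Finset V) : Set V) = Set.univ := by simp [Set.insert_eq]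
  simp only [KI, ← and_imp, hcompl, forall_eq, hinsert, subFI_univ_iff]

end BinaryCSP

theorem stmt_0_general {V α : Type} [DecidableEq V] (P : BinaryCSP V α) (v : V) (a b : α)
    (ha : a ∈ P.dom v) (hb : b ∈ P.dom v) :
    (P.NI v a b ↔ P.KI 2 v a b) ∧
    (∀ i j : ℕ, 2 ≤ i → i ≤ j → P.KI i v a b → P.KI j v a b) ∧
    (∀ [Fintype V], P.KI (Fintype.card V) v a b ↔ P.FI v a b) ∧
    (P.NI v a b → ∀ k, 2 ≤ k → P.KI k v a b) ∧
    (∀ k : ℕ, 2 ≤ k → k ≤ ENat.card V → P.KI k v a b → P.FI v a b) :=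
  ⟨BinaryCSP.ni_iff_ki_two ha hb,
    fun _ _ hi hij h => h.mono hi hij ha hb,
    BinaryCSP.ki_card_iff_fi,
    fun h k _ => h.ki ha hb k,
    fun _ hk hkV h => h.fi hk hkV ha hb⟩

/-- NI ↔ 2-interchangeability; i-interchangeability implies
j-interchangeability for 2 ≤ i ≤ j ≤ n; n-interchangeability ↔ FI; consequently
NI implies k-interchangeability for every 2 ≤ k ≤ n, which in turn implies FI. -/
theorem stmt_0 {V α : Type} [Fintype V] [DecidableEq V] [Fintype α]
    (P : BinaryCSP V α) (v : V) (a b : α)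
    (ha : a ∈ P.dom v) (hb : b ∈ P.dom v) :
    (P.NI v a b ↔ P.KI 2 v a b) ∧
    (∀ i j : ℕ, 2 ≤ i → i ≤ j → j ≤ Fintype.card V →
      P.KI i v a b → P.KI j v a b) ∧
    (P.KI (Fintype.card V) v a b ↔ P.FI v a b) ∧
    (P.NI v a b → ∀ k, 2 ≤ k → k ≤ Fintype.card V → P.KI k v a b) ∧
    (∀ k, 2 ≤ k → k ≤ Fintype.card V → P.KI k v a b → P.FI v a b) := by
  obtain ⟨ni_iff, mono, card_iff, ni_ki, ki_fi⟩ := stmt_0_general P v a b ha hb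
  exact ⟨ni_iff, fun i j hi hij _ => mono i j hi hij, card_iff, fun h k hk _ => ni_ki h k hk,
    fun k hk hkV => ki_fi k hk (by simpa using hkV)⟩
end

section
/- If values a, b ∈ D(v) of a binary CSP are dynamically neighborhood interchangeable with respect to a partial assignment A on a set W of variables with v ∉ W, then a and b are fully dynamically interchangeable with respect to A. -/
namespace BinaryCSP

variable {V α : Type} {P : BinaryCSP V α} {W : Set V} {A : V → α} {v : V} {a b : α}

theorem Solution.update [DecidableEq V] {s : V → α} (hs : P.Solution s) (hb : b ∈ P.dom v)
    (hcompat : ∀ w, P.hasCstr v w → P.compat v b w (s w)) :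
    P.Solution (Function.update s v b) := by
  have hdom : ∀ x, Function.update s v b x ∈ P.dom x :=
    (Function.forall_update_iff s fun x c => c ∈ P.dom x).mpr ⟨hb, fun x _ => hs.1 x⟩
  refine ⟨hdom, fun x y hxy => ?_⟩
  rcases eq_or_ne x v with rfl | hxv
  · have hyx : y ≠ x := by
      rintro rfl
      exact P.hasCstr_irrefl y hxy
    rw [Function.update_self, Function.update_of_ne hyx]
    exact hcompat y hxy
  · rw [Function.update_of_ne hxv]
    rcases eq_or_ne y v with rfl | hyv
    · rw [Function.update_self]
      exact P.compat_symm (hcompat x (P.hasCstr_symm hxy))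
    · rw [Function.update_of_ne hyv]
      exact hs.2 x y hxy

namespace DynNI

theorem symm (h : P.DynNI W A v a b) : P.DynNI W A v b a :=
  ⟨fun w hw hvw => (h.1 w hw hvw).symm, fun w hw hvw => (h.2 w hw hvw).symm⟩

theorem compat_iff (h : P.DynNI W A v a b) {w : V} {c : α} (hvw : P.hasCstr v w)
    (hc : c ∈ P.dom w) (hcA : w ∈ W → c = A w) :
    P.compat v a w c ↔ P.compat v b w c := by
  by_cases hw : w ∈ W
  · rw [hcA hw]
    exact h.2 w hw hvw
  · have mem_support_iff : c ∈ P.Support v a w ↔ c ∈ P.Support v b w := by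
      rw [h.1 w hw hvw]
    simpa only [Support, Set.mem_ofPred_eq, hc, true_and] using mem_support_iff

theorem fDynSub [DecidableEq V] (h : P.DynNI W A v a b) (ha : a ∈ P.dom v) :
    P.FDynSub W A v a b := by
  rintro s hs hsA rfl
  exact hs.update ha fun w hvw =>
    (h.compat_iff hvw (hs.1 w) (hsA w)).mpr (hs.2 v w hvw)

end DynNI

end BinaryCSP

theorem stmt_11_general {V α : Type} [DecidableEq V] (P : BinaryCSP V α) (v : V) (a b : α)
    (ha : a ∈ P.dom v) (hb : b ∈ P.dom v) (W : Set V) (A : V → α)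
    (h : P.DynNI W A v a b) :
    P.FDynI W A v a b :=
  ⟨h.symm.fDynSub hb, h.fDynSub ha⟩

/-- DynNI with respect to a partial assignment `A` on `W` (with `v ∉ W`)
implies FDynI with respect to `A`. -/
theorem stmt_11 {V α : Type} [Fintype V] [DecidableEq V] [Fintype α]
    (P : BinaryCSP V α) (v : V) (a b : α)
    (ha : a ∈ P.dom v) (hb : b ∈ P.dom v)
    (W : Set V) (A : V → α) (hvW : v ∉ W) (hA : ∀ w ∈ W, A w ∈ P.dom w)
    (h : P.DynNI W A v a b) :
    P.FDynI W A v a b :=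
  stmt_11_general P v a b ha hb W A h
end

section
/- If values a, b ∈ D(v) of a binary CSP are neighborhood tuple interchangeable with respect to a set S of variables with v ∉ S, then a and b are partially interchangeable with respect to the set S ∪ {v}. -/
/-!
Given a solution `s` with `s v = a`, interchangeability provides a partial solution `t` on
`S ∪ {v}` with `t v = b`. Overwriting `s` by `t` on `S ∪ {v}` gives the required solution: the only
constraints at risk cross the boundary of `S ∪ {v}`, and they survive because the value of `s` on
the outer side lies in the support of `s`, hence of `t`, on the inner side.
-/

namespace BinaryCSP

section Gluing

variable {V α : Type} {P : BinaryCSP V α} {T : Set V} {s t : V → α}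

theorem Solution.subSolution (hs : P.Solution s) (T : Set V) : P.SubSolution T s :=
  ⟨fun u _ => hs.1 u, fun u _ w _ => hs.2 u w⟩

theorem Solution.mem_support (hs : P.Solution s) {u w : V} (huw : P.hasCstr u w) :
    s w ∈ P.Support u (s u) w :=
  ⟨hs.1 w, hs.2 u w huw⟩

theorem SubSolution.solution_piecewise [∀ u, Decidable (u ∈ T)] (ht : P.SubSolution T t)
    (hs : P.SubSolution Tᶜ s)
    (hcross : ∀ u ∈ T, ∀ w ∉ T, P.hasCstr u w → P.compat u (t u) w (s w)) :
    P.Solution (T.piecewise t s) := by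
  constructor
  · intro u
    by_cases hu : u ∈ T
    · simpa only [Set.piecewise_eq_of_mem _ _ _ hu] using ht.1 u hu
    · simpa only [Set.piecewise_eq_of_notMem _ _ _ hu] using hs.1 u hu
  · intro u w huw
    by_cases hu : u ∈ T <;> by_cases hw : w ∈ T <;>
      simp only [Set.piecewise, hu, hw, if_true, if_false]
    · exact ht.2 u hu w hw huw
    · exact hcross u hu w hw huw
    · exact P.compat_symm (hcross w hw u hu (P.hasCstr_symm huw))
    · exact hs.2 u hu w hw huw

theorem ForwNI.solution_piecewise [∀ u, Decidable (u ∈ T)] (hst : P.ForwNI T s t)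
    (hs : P.Solution s) (ht : P.SubSolution T t) : P.Solution (T.piecewise t s) := by
  refine ht.solution_piecewise (hs.subSolution Tᶜ) fun u hu w hw huw => ?_
  have hmem : s w ∈ P.Support u (t u) w := hst u hu w hw huw ▸ hs.mem_support huw
  exact hmem.2

end Gluing

section Interchangeability

variable {V α : Type} {P : BinaryCSP V α} {S : Set V} {v : V} {a b : α}

theorem NTI.symm (h : P.NTI S v a b) : P.NTI S v b a :=
  And.symm h

theorem NTI.exists_solution (h : P.NTI S v a b) {s : V → α} (hs : P.Solution s) (hsa : s v = a) :
    ∃ s', P.Solution s' ∧ s' v = b ∧ ∀ w ∉ insert v S, s' w = s w := by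
  classical
  obtain ⟨t, ht, htb, hst : P.ForwNI (insert v S) s t⟩ := h.1 s (hs.subSolution _) hsa
  refine ⟨(insert v S).piecewise t s, hst.solution_piecewise hs ht, ?_, fun w hw => ?_⟩
  · rw [Set.piecewise_eq_of_mem _ _ _ (Set.mem_insert v S), htb]
  · exact Set.piecewise_eq_of_notMem _ _ _ hw

end Interchangeability

end BinaryCSP

theorem stmt_13_general {V α : Type} {P : BinaryCSP V α} {S : Set V} {v : V} {a b : α}
    (h : P.NTI S v a b) : P.PI (insert v S) v a b :=
  ⟨fun _ hs hsa => h.exists_solution hs hsa, fun _ hs hsb => h.symm.exists_solution hs hsb⟩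

/-- NTI with respect to `S` (with `v ∉ S`) implies PI with respect to
`S ∪ {v}`. -/
theorem stmt_13 {V α : Type} [Fintype V] [DecidableEq V] [Fintype α]
    (P : BinaryCSP V α) (v : V) (a b : α)
    (ha : a ∈ P.dom v) (hb : b ∈ P.dom v)
    (S : Set V) (hvS : v ∉ S)
    (h : P.NTI S v a b) :
    P.PI (insert v S) v a b :=
  stmt_13_general h
end
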